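/- Let a, b, c be real numbers with c > a > 0, and let x ∈ (0,1). Then sgn(D_c F(a,b,c,x)) = −sgn(b), where D_c F denotes the partial derivative of F(a,b,c,x) with respect to the parameter c. -/

import Mathlib

/-- The rising factorial (Pochhammer symbol): `(y)_j = y(y+1)⋯(y+j-1)`, `(y)_0 = 1`. -/
noncomputable def risingFactorial (y : ℝ) : ℕ → ℝ
  | 0 => 1
  | m + 1 => risingFactorial y m * (y + m)

/-- The Gaussian hypergeometric function
`F(a,b,c,x) = ∑_{j≥0} (a)_j (b)_j / ((c)_j j!) xʲ`. -/
noncomputable def hypF (a b c x : ℝ) : ℝ :=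
  ∑' j : ℕ, risingFactorial a j * risingFactorial b j /
    (risingFactorial c j * (Nat.factorial j : ℝ)) * x ^ j

/-!
For `c > a > 0`, termwise differentiation gives `D_c F(a,b,c,x) = -∑ⱼ uⱼ Hⱼ(c)`, where `uⱼ` is the
`j`-th term of the series of `F(a,b,c,x)` and `Hⱼ(c) = ∑_{k<j} 1/(c+k)`. Since
`c/(c+k) = ∫ sᵏ dBeta(c,1)(s)`, summing the geometric series in `s` turns this into
`c D_c F(a,b,c,x) = -∫ (F(a,b,c,x) - F(a,b,c,xs)) / (1-s) dBeta(c,1)(s)`. By Euler's integral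
`F(a,b,c,x) = ∫ (1-xt)^(-b) dBeta(a,c-a)(t)`, the difference `F(a,b,c,x) - F(a,b,c,y)` has the
sign of `b(x-y)`, so the integrand above has the constant sign of `bx`.
-/

open MeasureTheory ProbabilityTheory Set Filter
open SignType (sign)

section Sign

lemma real_sign_eq_coe_sign (r : ℝ) : Real.sign r = (sign r : ℝ) := by
  rcases lt_trichotomy r 0 with hr | rfl | hr
  · simp [Real.sign_of_neg hr, sign_neg hr]
  · simp
  · simp [Real.sign_of_pos hr, sign_pos hr]

lemma sign_sub_of_strictMonoOn {G H : Type*} [AddCommGroup G] [LinearOrder G]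
    [IsOrderedAddMonoid G] [AddCommGroup H] [LinearOrder H] [IsOrderedAddMonoid H] {f : G → H}
    {S : Set G} (hf : StrictMonoOn f S) {p q : G} (hp : p ∈ S) (hq : q ∈ S) :
    sign (f p - f q) = sign (p - q) := by
  rcases lt_trichotomy p q with hpq | rfl | hpq
  · rw [sign_neg (sub_neg.2 (hf hp hq hpq)), sign_neg (sub_neg.2 hpq)]
  · simp
  · rw [sign_pos (sub_pos.2 (hf hq hp hpq)), sign_pos (sub_pos.2 hpq)]

lemma sign_rpow_sub_rpow {p q : ℝ} (hp : 0 < p) (hq : 0 < q) (r : ℝ) :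
    sign (p ^ r - q ^ r) = sign (r * (p - q)) := by
  calc sign (p ^ r - q ^ r)
      = sign (Real.exp (Real.log p * r) - Real.exp (Real.log q * r)) := by
        rw [Real.rpow_def_of_pos hp, Real.rpow_def_of_pos hq]
    _ = sign (r * (Real.log p - Real.log q)) := by
        rw [sign_sub_of_strictMonoOn (Real.exp_strictMono.strictMonoOn univ) (mem_univ _)
          (mem_univ _)]
        congr 1
        ring
    _ = sign (r * (p - q)) := by
        rw [sign_mul, sign_sub_of_strictMonoOn Real.strictMonoOn_log hp hq, ← sign_mul]

end Sign

section Integration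

variable {Ω : Type*} [MeasurableSpace Ω] {μ : Measure Ω}

lemma integral_pos_of_ae_pos [NeZero μ] {f : Ω → ℝ} (hf : Integrable f μ)
    (hpos : ∀ᵐ t ∂μ, 0 < f t) : 0 < ∫ t, f t ∂μ := by
  have hnonneg : 0 ≤ᵐ[μ] f := hpos.mono fun _ ht => ht.le
  refine (integral_nonneg_of_ae hnonneg).lt_of_ne' fun hzero => ?_
  have hf_zero := (integral_eq_zero_iff_of_nonneg_ae hnonneg hf).1 hzero
  obtain ⟨t, ht_zero, ht_pos⟩ := (hf_zero.and hpos).exists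
  exact ht_pos.ne' ht_zero

lemma sign_integral_of_ae_sign_eq [NeZero μ] {f : Ω → ℝ} {σ : SignType} (hf : Integrable f μ)
    (hσ : ∀ᵐ t ∂μ, sign (f t) = σ) : sign (∫ t, f t ∂μ) = σ := by
  cases σ with
  | zero =>
    have hzero : f =ᵐ[μ] 0 := hσ.mono fun _ ht => sign_eq_zero_iff.1 ht
    exact sign_eq_zero_iff.2 (integral_eq_zero_of_ae hzero)
  | pos => exact sign_pos (integral_pos_of_ae_pos hf (hσ.mono fun _ ht => sign_eq_one_iff.1 ht))
  | neg =>
    have hneg_pos : ∀ᵐ t ∂μ, 0 < -f t :=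
      hσ.mono fun _ ht => neg_pos.2 (sign_eq_neg_one_iff.1 ht)
    have := integral_pos_of_ae_pos hf.neg hneg_pos
    simp only [Pi.neg_apply, integral_neg, neg_pos] at this
    exact sign_neg this

lemma integrable_and_hasSum_integral_of_norm_le {E : Type*} [NormedAddCommGroup E]
    [NormedSpace ℝ E] [IsFiniteMeasure μ] {f : ℕ → Ω → E} {g : Ω → E} {u : ℕ → ℝ}
    (hf : ∀ j, AEStronglyMeasurable (f j) μ) (hu : Summable u)
    (hfu : ∀ᵐ t ∂μ, ∀ j, ‖f j t‖ ≤ u j)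
    (hg : ∀ᵐ t ∂μ, HasSum (fun j => f j t) (g t)) :
    Integrable g μ ∧ HasSum (fun j => ∫ t, f j t ∂μ) (∫ t, g t ∂μ) := by
  constructor
  · have hg_meas : AEStronglyMeasurable g μ :=
      aestronglyMeasurable_of_tendsto_ae atTop
        (fun n => Finset.aestronglyMeasurable_fun_sum (Finset.range n) fun j _ => hf j)
        (hg.mono fun _ ht => ht.tendsto_sum_nat)
    refine Integrable.of_bound hg_meas (∑' j, u j) ?_
    filter_upwards [hfu, hg] with t ht_le ht_sum
    exact ht_sum.norm_le_of_bounded hu.hasSum ht_le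
  · exact hasSum_integral_of_dominated_convergence (fun j _ => u j) hf (ae_all_iff.1 hfu)
      (ae_of_all μ fun _ => hu) (integrable_const _) hg

end Integration

section RisingFactorial

lemma risingFactorial_eq_ascPochhammer_eval (y : ℝ) (j : ℕ) :
    risingFactorial y j = (ascPochhammer ℝ j).eval y := by
  induction j with
  | zero => simp [risingFactorial]
  | succ j ih => rw [risingFactorial, ih, ascPochhammer_succ_eval]

lemma risingFactorial_pos {y : ℝ} (hy : 0 < y) (j : ℕ) : 0 < risingFactorial y j :=
  risingFactorial_eq_ascPochhammer_eval y j ▸ ascPochhammer_pos j y hy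

lemma risingFactorial_succ_left (y : ℝ) (j : ℕ) :
    risingFactorial y (j + 1) = y * risingFactorial (y + 1) j := by
  simp [risingFactorial_eq_ascPochhammer_eval, ascPochhammer_succ_left, Polynomial.eval_comp]

lemma abs_risingFactorial_le {y z : ℝ} (hyz : |y| ≤ z) (j : ℕ) :
    |risingFactorial y j| ≤ risingFactorial z j := by
  induction j with
  | zero => simp [risingFactorial]
  | succ j ih =>
    have hfactor : |y + j| ≤ z + j := by
      simpa using (abs_add_le y j).trans (add_le_add_left hyz _)
    rw [risingFactorial, risingFactorial, abs_mul]
    exact mul_le_mul ih hfactor (abs_nonneg _) ((abs_nonneg _).trans ih)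

lemma ringChoose_add_sub_one_eq_risingFactorial_div (y : ℝ) (j : ℕ) :
    Ring.choose (y + j - 1) j = risingFactorial y j / j.factorial := by
  rw [eq_div_iff (by positivity), mul_comm, ← nsmul_eq_mul, ← Ring.multichoose_eq,
    Ring.factorial_nsmul_multichoose_eq_ascPochhammer, Polynomial.ascPochhammer_smeval_eq_eval,
    risingFactorial_eq_ascPochhammer_eval]

lemma hasSum_risingFactorial_div_factorial_mul_pow (b : ℝ) {y : ℝ} (hy : |y| < 1) :
    HasSum (fun j => risingFactorial b j / j.factorial * y ^ j) ((1 - y) ^ (-b)) := by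
  have hball : y ∈ Metric.eball (0 : ℝ) 1 := by
    rwa [Metric.mem_eball, edist_zero_right, ← ofReal_norm, ENNReal.ofReal_lt_one]
  have hsum := (Real.one_div_one_sub_rpow_hasFPowerSeriesOnBall_zero b).hasSum hball
  rw [Real.rpow_neg (sub_nonneg.2 (abs_lt.1 hy).2.le), ← one_div]
  simpa only [zero_add, FormalMultilinearSeries.ofScalars_apply_eq, smul_eq_mul,
    ringChoose_add_sub_one_eq_risingFactorial_div] using hsum

lemma succ_mul_abs_risingFactorial_le (b : ℝ) (j : ℕ) :
    (j + 1) * |risingFactorial b j| ≤ (|b| + 1) * risingFactorial (|b| + 2) j := by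
  have hb : |b| ≤ |b| + 1 := by linarith
  calc (j + 1) * |risingFactorial b j|
      ≤ (|b| + 1 + j) * risingFactorial (|b| + 1) j := by
        gcongr ?_ * ?_
        · linarith [abs_nonneg b]
        · exact abs_risingFactorial_le hb j
    _ = risingFactorial (|b| + 1) (j + 1) := by rw [risingFactorial, mul_comm]
    _ = (|b| + 1) * risingFactorial (|b| + 2) j := by
        rw [risingFactorial_succ_left, add_assoc, one_add_one_eq_two]

lemma summable_succ_mul_abs_risingFactorial (b : ℝ) {x : ℝ} (hx : |x| < 1) :
    Summable fun j : ℕ => (j + 1) * (|risingFactorial b j| / j.factorial * |x| ^ j) := by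
  have hmajorant := (hasSum_risingFactorial_div_factorial_mul_pow (|b| + 2)
    (by rwa [abs_abs])).summable.mul_left (|b| + 1)
  refine hmajorant.of_nonneg_of_le (fun j => by positivity) fun j => ?_
  calc (j + 1) * (|risingFactorial b j| / j.factorial * |x| ^ j)
      = (j + 1) * |risingFactorial b j| / j.factorial * |x| ^ j := by ring
    _ ≤ (|b| + 1) * risingFactorial (|b| + 2) j / j.factorial * |x| ^ j := by
        gcongr ?_ / _ * _
        exact succ_mul_abs_risingFactorial_le b j
    _ = (|b| + 1) * (risingFactorial (|b| + 2) j / j.factorial * |x| ^ j) := by ring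

/-- The harmonic-type sum `1/c + 1/(c+1) + ⋯ + 1/(c+j-1)`, which is the logarithmic derivative of
the rising factorial `(c)_j` with respect to `c`. -/
noncomputable def shiftedHarmonic (c : ℝ) (j : ℕ) : ℝ :=
  ∑ k ∈ Finset.range j, 1 / (c + k)

lemma hasDerivAt_risingFactorial {c : ℝ} (hc : 0 < c) (j : ℕ) :
    HasDerivAt (fun y => risingFactorial y j) (risingFactorial c j * shiftedHarmonic c j) c := by
  induction j with
  | zero => simpa [risingFactorial, shiftedHarmonic] using hasDerivAt_const c (1 : ℝ)
  | succ j ih =>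
    refine (ih.mul ((hasDerivAt_id c).add_const (j : ℝ))).congr_deriv ?_
    have : c + j ≠ 0 := by positivity
    simp only [risingFactorial, shiftedHarmonic, Finset.sum_range_succ, id]
    field_simp

lemma shiftedHarmonic_nonneg {c : ℝ} (hc : 0 < c) (j : ℕ) : 0 ≤ shiftedHarmonic c j :=
  Finset.sum_nonneg fun k _ => by positivity

lemma shiftedHarmonic_le {a c : ℝ} (ha : 0 < a) (hac : a ≤ c) (j : ℕ) :
    shiftedHarmonic c j ≤ j / a := by
  calc shiftedHarmonic c j ≤ ∑ _k ∈ Finset.range j, 1 / a :=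
        Finset.sum_le_sum fun k _ =>
          one_div_le_one_div_of_le ha (hac.trans (le_add_of_nonneg_right k.cast_nonneg))
    _ = j / a := by simp [div_eq_mul_inv]

end RisingFactorial

section BetaMeasure

variable {α β : ℝ}

lemma betaPDFReal_nonneg (hα : 0 < α) (hβ : 0 < β) (t : ℝ) : 0 ≤ betaPDFReal α β t := by
  by_cases ht : 0 < t ∧ t < 1
  · exact (betaPDFReal_pos ht.1 ht.2 hα hβ).le
  · simp [betaPDFReal, ht]

lemma integral_betaPDFReal (hα : 0 < α) (hβ : 0 < β) : ∫ t, betaPDFReal α β t = 1 := by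
  rw [integral_eq_lintegral_of_nonneg_ae (ae_of_all _ (betaPDFReal_nonneg hα hβ))
    (measurable_betaPDFReal α β).aestronglyMeasurable]
  exact (congrArg ENNReal.toReal (lintegral_betaPDF_eq_one hα hβ)).trans ENNReal.toReal_one

lemma measurable_betaPDF (α β : ℝ) : Measurable (betaPDF α β) :=
  (measurable_betaPDFReal α β).ennreal_ofReal

lemma ae_mem_Ioo_betaMeasure (α β : ℝ) : ∀ᵐ t ∂betaMeasure α β, t ∈ Ioo (0 : ℝ) 1 := by
  rw [betaMeasure, ae_withDensity_iff (measurable_betaPDF α β)]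
  refine ae_of_all _ fun t ht => ⟨?_, ?_⟩
  · exact not_le.1 fun h => ht (betaPDF_eq_zero_of_nonpos h)
  · exact not_le.1 fun h => ht (betaPDF_eq_zero_of_one_le h)

lemma beta_add_one_left (hα : 0 < α) (hβ : 0 < β) :
    beta (α + 1) β = α / (α + β) * beta α β := by
  rw [beta, beta, add_right_comm, Real.Gamma_add_one hα.ne', Real.Gamma_add_one (by positivity)]
  field_simp

lemma beta_add_natCast_left (hα : 0 < α) (hβ : 0 < β) (j : ℕ) :
    beta (α + j) β = risingFactorial α j / risingFactorial (α + β) j * beta α β := by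
  induction j with
  | zero => simp [risingFactorial]
  | succ j ih =>
    rw [Nat.cast_succ, ← add_assoc, beta_add_one_left (by positivity) hβ, ih, risingFactorial,
      risingFactorial, mul_div_mul_comm, add_right_comm α _ β]
    ring

lemma betaPDFReal_mul_pow (hα : 0 < α) (hβ : 0 < β) (j : ℕ) (t : ℝ) :
    betaPDFReal α β t * t ^ j = beta (α + j) β / beta α β * betaPDFReal (α + j) β t := by
  by_cases ht : 0 < t ∧ t < 1
  · have hβ₀ := beta_pos hα hβ
    have hβⱼ := beta_pos (α := α + j) (by positivity) hβ
    simp only [betaPDFReal, ht, and_self, if_true]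
    rw [add_sub_right_comm, Real.rpow_add_natCast ht.1.ne']
    field_simp
  · simp [betaPDFReal, ht]

lemma integral_pow_betaMeasure (hα : 0 < α) (hβ : 0 < β) (j : ℕ) :
    ∫ t, t ^ j ∂betaMeasure α β = risingFactorial α j / risingFactorial (α + β) j := by
  have hdensity (t : ℝ) : (betaPDF α β t).toReal • t ^ j =
      beta (α + j) β / beta α β * betaPDFReal (α + j) β t := by
    rw [betaPDF, ENNReal.toReal_ofReal (betaPDFReal_nonneg hα hβ t), smul_eq_mul,
      betaPDFReal_mul_pow hα hβ]
  rw [betaMeasure, integral_withDensity_eq_integral_toReal_smul (measurable_betaPDF α β)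
    (ae_of_all _ fun t => ENNReal.ofReal_lt_top)]
  simp_rw [hdensity]
  rw [integral_const_mul, integral_betaPDFReal (by positivity) hβ, mul_one,
    beta_add_natCast_left hα hβ, mul_div_cancel_right₀ _ (beta_pos hα hβ).ne']

lemma integral_pow_betaMeasure_one {c : ℝ} (hc : 0 < c) (k : ℕ) :
    ∫ s, s ^ k ∂betaMeasure c 1 = c * (1 / (c + k)) := by
  have hpos := risingFactorial_pos (add_pos hc one_pos) k
  have hshift : risingFactorial c k * (c + k) = c * risingFactorial (c + 1) k :=
    risingFactorial_succ_left c k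
  rw [integral_pow_betaMeasure hc one_pos, mul_one_div, div_eq_div_iff hpos.ne' (by positivity),
    hshift]

lemma integral_geom_sum_betaMeasure_one {c : ℝ} (hc : 0 < c) (j : ℕ) :
    ∫ s, ∑ k ∈ Finset.range j, s ^ k ∂betaMeasure c 1 = c * shiftedHarmonic c j := by
  have := isProbabilityMeasureBeta hc one_pos
  have hintegrable (k : ℕ) : Integrable (fun s : ℝ => s ^ k) (betaMeasure c 1) := by
    refine Integrable.of_bound (by fun_prop) 1 ((ae_mem_Ioo_betaMeasure c 1).mono fun s hs => ?_)
    rw [Real.norm_of_nonneg (pow_nonneg hs.1.le k)]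
    exact pow_le_one₀ hs.1.le hs.2.le
  rw [integral_finsetSum _ fun k _ => hintegrable k, shiftedHarmonic, Finset.mul_sum]
  exact Finset.sum_congr rfl fun k _ => integral_pow_betaMeasure_one hc k

end BetaMeasure

section DifferenceQuotient

lemma hasSum_mul_geom_sum {K : Type*} [Field K] [TopologicalSpace K] [IsTopologicalRing K]
    {u : ℕ → K} {A B s : K} (hs : s ≠ 1) (hA : HasSum u A)
    (hB : HasSum (fun j => u j * s ^ j) B) :
    HasSum (fun j => u j * ∑ k ∈ Finset.range j, s ^ k) ((A - B) / (1 - s)) := by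
  refine ((hA.sub hB).div_const (1 - s)).congr_fun fun j => ?_
  rw [eq_div_iff (sub_ne_zero.2 hs.symm), mul_assoc, geom_sum_mul_neg]
  ring

lemma abs_geom_sum_le {s : ℝ} (hs : |s| ≤ 1) (j : ℕ) :
    |∑ k ∈ Finset.range j, s ^ k| ≤ j := by
  calc |∑ k ∈ Finset.range j, s ^ k| ≤ ∑ k ∈ Finset.range j, |s ^ k| :=
        Finset.abs_sum_le_sum_abs _ _
    _ ≤ ∑ _k ∈ Finset.range j, (1 : ℝ) :=
        Finset.sum_le_sum fun k _ => by
          rw [abs_pow]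
          exact pow_le_one₀ (abs_nonneg s) hs
    _ = j := by simp

variable {u : ℕ → ℝ}

lemma summable_of_summable_succ_mul_abs (hu : Summable fun j : ℕ => (j + 1) * |u j|) :
    Summable u :=
  hu.of_norm_bounded fun j =>
    le_mul_of_one_le_left (abs_nonneg _) (le_add_of_nonneg_left j.cast_nonneg)

lemma integrable_and_hasSum_differenceQuotient_betaMeasure_one {c : ℝ} (hc : 0 < c)
    (hu : Summable fun j : ℕ => (j + 1) * |u j|) :
    Integrable (fun s => (∑' j, u j - ∑' j, u j * s ^ j) / (1 - s)) (betaMeasure c 1) ∧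
      HasSum (fun j => c * (u j * shiftedHarmonic c j))
        (∫ s, (∑' j, u j - ∑' j, u j * s ^ j) / (1 - s) ∂betaMeasure c 1) := by
  have := isProbabilityMeasureBeta hc one_pos
  have hu' : Summable u := summable_of_summable_succ_mul_abs hu
  have hterm (j : ℕ) : ∫ s, u j * ∑ k ∈ Finset.range j, s ^ k ∂betaMeasure c 1 =
      c * (u j * shiftedHarmonic c j) := by
    rw [integral_const_mul, integral_geom_sum_betaMeasure_one hc, mul_left_comm]
  simp_rw [← hterm]
  refine integrable_and_hasSum_integral_of_norm_le (fun j => by fun_prop) hu ?_ ?_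
  · filter_upwards [ae_mem_Ioo_betaMeasure c 1] with s hs j
    have hgeom := abs_geom_sum_le (abs_le.2 ⟨by linarith [hs.1], hs.2.le⟩) j
    rw [Real.norm_eq_abs, abs_mul, mul_comm]
    gcongr
    linarith
  · filter_upwards [ae_mem_Ioo_betaMeasure c 1] with s hs
    have hus : Summable fun j => u j * s ^ j := by
      refine hu'.abs.of_norm_bounded fun j => ?_
      rw [norm_mul, norm_pow, Real.norm_of_nonneg hs.1.le]
      exact mul_le_of_le_one_right (abs_nonneg _) (pow_le_one₀ hs.1.le hs.2.le)
    exact hasSum_mul_geom_sum hs.2.ne hu'.hasSum hus.hasSum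

end DifferenceQuotient

section Hypergeometric

/-- The coefficient of `xʲ` in the Gaussian hypergeometric series `F(a,b,c,x)`. -/
noncomputable def hypCoeff (a b c : ℝ) (j : ℕ) : ℝ :=
  risingFactorial a j * risingFactorial b j / (risingFactorial c j * j.factorial)

variable {a b c x y : ℝ}

lemma hypCoeff_eq_mul (a b c : ℝ) (j : ℕ) : hypCoeff a b c j =
    risingFactorial a j / risingFactorial c j * (risingFactorial b j / j.factorial) :=
  mul_div_mul_comm _ _ _ _

lemma abs_hypCoeff_le (ha : 0 < a) (hac : a ≤ c) (j : ℕ) :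
    |hypCoeff a b c j| ≤ |risingFactorial b j| / j.factorial := by
  have ha_pos := risingFactorial_pos ha j
  have hc_pos := risingFactorial_pos (ha.trans_le hac) j
  have hle : risingFactorial a j ≤ risingFactorial c j :=
    (le_abs_self _).trans (abs_risingFactorial_le (by rwa [abs_of_pos ha]) j)
  rw [hypCoeff_eq_mul, abs_mul, abs_div (risingFactorial b j), Nat.abs_cast,
    abs_of_pos (div_pos ha_pos hc_pos)]
  exact mul_le_of_le_one_left (by positivity) ((div_le_one hc_pos).2 hle)

lemma summable_succ_mul_abs_hypCoeff_mul_pow (ha : 0 < a) (hac : a ≤ c) (hx : |x| < 1) :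
    Summable fun j : ℕ => (j + 1) * |hypCoeff a b c j * x ^ j| := by
  refine (summable_succ_mul_abs_risingFactorial b hx).of_nonneg_of_le
    (fun j => by positivity) fun j => ?_
  rw [abs_mul, abs_pow]
  gcongr
  exact abs_hypCoeff_le ha hac j

lemma abs_mul_lt_one_of_mem_Ioo {t : ℝ} (hx : |x| < 1) (ht : t ∈ Ioo (0 : ℝ) 1) :
    |x * t| < 1 := by
  rw [abs_mul, abs_of_pos ht.1]
  exact mul_lt_one_of_nonneg_of_lt_one_left (abs_nonneg x) hx ht.2.le

lemma integrable_and_hypF_eq_integral_betaMeasure (ha : 0 < a) (hac : a < c) (hx : |x| < 1) :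
    Integrable (fun t => (1 - x * t) ^ (-b)) (betaMeasure a (c - a)) ∧
      hypF a b c x = ∫ t, (1 - x * t) ^ (-b) ∂betaMeasure a (c - a) := by
  have hca : 0 < c - a := sub_pos.2 hac
  have := isProbabilityMeasureBeta ha hca
  have hterm (j : ℕ) : ∫ t, risingFactorial b j / j.factorial * (x * t) ^ j
      ∂betaMeasure a (c - a) = hypCoeff a b c j * x ^ j := by
    simp_rw [mul_pow]
    rw [integral_const_mul, integral_const_mul, integral_pow_betaMeasure ha hca,
      add_sub_cancel, hypCoeff_eq_mul]
    ring
  have hsummable : Summable fun j => |risingFactorial b j| / j.factorial * |x| ^ j :=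
    summable_of_summable_succ_mul_abs <| by
      simpa only [abs_mul, abs_div, abs_abs, abs_pow, Nat.abs_cast] using
        summable_succ_mul_abs_risingFactorial b hx
  have hbound : ∀ᵐ t ∂betaMeasure a (c - a), ∀ j, ‖risingFactorial b j / j.factorial * (x * t) ^ j‖
      ≤ |risingFactorial b j| / j.factorial * |x| ^ j := by
    filter_upwards [ae_mem_Ioo_betaMeasure a (c - a)] with t ht j
    rw [Real.norm_eq_abs, abs_mul, abs_div, Nat.abs_cast, abs_pow, abs_mul, abs_of_pos ht.1]
    gcongr ?_ * ?_ ^ _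
    · exact mul_nonneg (abs_nonneg x) ht.1.le
    · exact mul_le_of_le_one_right (abs_nonneg x) ht.2.le
  obtain ⟨hintegrable, hsum⟩ := integrable_and_hasSum_integral_of_norm_le
    (fun j => by fun_prop) hsummable hbound
    ((ae_mem_Ioo_betaMeasure a (c - a)).mono fun t ht =>
      hasSum_risingFactorial_div_factorial_mul_pow b (abs_mul_lt_one_of_mem_Ioo hx ht))
  simp_rw [hterm] at hsum
  exact ⟨hintegrable, hsum.tsum_eq⟩

lemma sign_hypF_sub_hypF (ha : 0 < a) (hac : a < c) (hx : |x| < 1) (hy : |y| < 1) :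
    sign (hypF a b c x - hypF a b c y) = sign (b * (x - y)) := by
  have := isProbabilityMeasureBeta ha (sub_pos.2 hac)
  obtain ⟨hx_int, hx_eq⟩ := integrable_and_hypF_eq_integral_betaMeasure (b := b) ha hac hx
  obtain ⟨hy_int, hy_eq⟩ := integrable_and_hypF_eq_integral_betaMeasure (b := b) ha hac hy
  rw [hx_eq, hy_eq, ← integral_sub hx_int hy_int]
  refine sign_integral_of_ae_sign_eq (hx_int.sub hy_int) ?_
  filter_upwards [ae_mem_Ioo_betaMeasure a (c - a)] with t ht
  have hpos {z : ℝ} (hz : |z| < 1) : 0 < 1 - z * t :=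
    sub_pos.2 (abs_lt.1 (abs_mul_lt_one_of_mem_Ioo hz ht)).2
  calc sign ((1 - x * t) ^ (-b) - (1 - y * t) ^ (-b))
      = sign (-b * ((1 - x * t) - (1 - y * t))) := sign_rpow_sub_rpow (hpos hx) (hpos hy) _
    _ = sign (b * (x - y) * t) := by congr 1; ring
    _ = sign (b * (x - y)) := by rw [sign_mul, sign_pos ht.1, mul_one]

lemma hasDerivAt_hypCoeff (a b : ℝ) (hc : 0 < c) (j : ℕ) :
    HasDerivAt (fun c' => hypCoeff a b c' j) (-(hypCoeff a b c j * shiftedHarmonic c j)) c := by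
  have hpos := risingFactorial_pos hc j
  have hdenom := (hasDerivAt_risingFactorial hc j).mul_const (j.factorial : ℝ)
  refine ((hasDerivAt_const c (risingFactorial a j * risingFactorial b j)).div hdenom
    (by positivity)).congr_deriv ?_
  rw [hypCoeff]
  field_simp
  ring

lemma hasDerivAt_hypF (ha : 0 < a) (hac : a < c) (hx : |x| < 1) :
    HasDerivAt (fun c' => hypF a b c' x)
      (-∑' j, hypCoeff a b c j * x ^ j * shiftedHarmonic c j) c := by
  have hbound (j : ℕ) (c' : ℝ) (hc' : c' ∈ Ioi a) :
      ‖-(hypCoeff a b c' j * shiftedHarmonic c' j) * x ^ j‖ ≤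
        (j + 1) * (|risingFactorial b j| / j.factorial * |x| ^ j) * (1 / a) := by
    have hH_nonneg := shiftedHarmonic_nonneg (ha.trans hc') j
    calc ‖-(hypCoeff a b c' j * shiftedHarmonic c' j) * x ^ j‖
        = |hypCoeff a b c' j| * shiftedHarmonic c' j * |x| ^ j := by
          rw [norm_mul, norm_neg, norm_mul, norm_pow, Real.norm_of_nonneg hH_nonneg,
            Real.norm_eq_abs, Real.norm_eq_abs]
      _ ≤ |risingFactorial b j| / j.factorial * ((j + 1) / a) * |x| ^ j := by
          gcongr
          · exact abs_hypCoeff_le ha hc'.le j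
          · exact (shiftedHarmonic_le ha hc'.le j).trans (by gcongr; linarith)
      _ = (j + 1) * (|risingFactorial b j| / j.factorial * |x| ^ j) * (1 / a) := by ring
  have hseries := hasDerivAt_tsum_of_isPreconnected
    ((summable_succ_mul_abs_risingFactorial b hx).mul_right (1 / a)) isOpen_Ioi isPreconnected_Ioi
    (fun j c' hc' => (hasDerivAt_hypCoeff a b (ha.trans hc') j).mul_const (x ^ j)) hbound hac
    (summable_of_summable_succ_mul_abs (summable_succ_mul_abs_hypCoeff_mul_pow ha hac.le hx)) hac
  refine hseries.congr_deriv ?_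
  rw [← tsum_neg]
  exact tsum_congr fun j => by ring

lemma integrable_and_integral_differenceQuotient_hypF (ha : 0 < a) (hac : a < c) (hx : |x| < 1) :
    Integrable (fun s => (hypF a b c x - hypF a b c (x * s)) / (1 - s)) (betaMeasure c 1) ∧
      ∫ s, (hypF a b c x - hypF a b c (x * s)) / (1 - s) ∂betaMeasure c 1 =
        c * ∑' j, hypCoeff a b c j * x ^ j * shiftedHarmonic c j := by
  have hscale (s : ℝ) :
      hypF a b c (x * s) = ∑' j, hypCoeff a b c j * x ^ j * s ^ j :=
    tsum_congr fun j => by rw [mul_pow, ← mul_assoc, hypCoeff]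
  obtain ⟨hintegrable, hsum⟩ := integrable_and_hasSum_differenceQuotient_betaMeasure_one
    (ha.trans hac) (summable_succ_mul_abs_hypCoeff_mul_pow (b := b) ha hac.le hx)
  simp_rw [hscale]
  exact ⟨hintegrable, by rw [← tsum_mul_left]; exact hsum.tsum_eq.symm⟩

lemma sign_tsum_hypCoeff_mul_shiftedHarmonic (ha : 0 < a) (hac : a < c) (hx : |x| < 1) :
    sign (∑' j, hypCoeff a b c j * x ^ j * shiftedHarmonic c j) = sign (b * x) := by
  have hc : 0 < c := ha.trans hac
  have := isProbabilityMeasureBeta hc one_pos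
  obtain ⟨hintegrable, hintegral⟩ :=
    integrable_and_integral_differenceQuotient_hypF (b := b) ha hac hx
  rw [← one_mul (sign (tsum _)), ← sign_pos hc, ← sign_mul, ← hintegral]
  refine sign_integral_of_ae_sign_eq hintegrable ?_
  filter_upwards [ae_mem_Ioo_betaMeasure c 1] with s hs
  have hs' : 0 < 1 - s := sub_pos.2 hs.2
  calc sign ((hypF a b c x - hypF a b c (x * s)) / (1 - s))
      = sign (hypF a b c x - hypF a b c (x * s)) := by
        rw [div_eq_mul_inv, sign_mul, sign_pos (inv_pos.2 hs'), mul_one]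
    _ = sign (b * (x - x * s)) :=
        sign_hypF_sub_hypF ha hac hx (abs_mul_lt_one_of_mem_Ioo hx hs)
    _ = sign (b * x * (1 - s)) := by congr 1; ring
    _ = sign (b * x) := by rw [sign_mul, sign_pos hs', mul_one]

end Hypergeometric

theorem stmt11_general (a b c x : ℝ) (ha : 0 < a) (hac : a < c) (hx : |x| < 1) :
    Real.sign (deriv (fun c' : ℝ => hypF a b c' x) c) = -Real.sign (b * x) := by
  rw [(hasDerivAt_hypF ha hac hx).deriv, Real.sign_neg, real_sign_eq_coe_sign,
    real_sign_eq_coe_sign, sign_tsum_hypCoeff_mul_shiftedHarmonic ha hac hx]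

/-- For `c > a > 0` and `0 < x < 1`, `sgn(D_c F(a,b,c,x)) = -sgn(b)`. -/
theorem stmt11 (a b c x : ℝ) (ha : 0 < a) (hac : a < c)
    (hx : x ∈ Set.Ioo (0 : ℝ) 1) :
    Real.sign (deriv (fun c' : ℝ => hypF a b c' x) c) = -Real.sign b := by
  rw [stmt11_general a b c x ha hac (abs_lt.2 ⟨by linarith [hx.1], hx.2⟩), real_sign_eq_coe_sign,
    real_sign_eq_coe_sign, sign_mul, sign_pos hx.1, mul_one]
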